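/- arXiv:1207.2895 — 3 statements merged into one kernel-verified Lean document; each statement's English description precedes it below -/
import Mathlib

section
/- Let α ∈ ℂ with α ≠ 0, let k ≥ 1, and let a : Fin (k+1) → ℤ → ℤ → ℂ be coefficients such that for every solution v of L_α the linear expression Ŵ(n,m) := Σ_{j=0}^{k} a(j)(n,m)·v(n+j,m) satisfies Ŵ(n,m+1) = Ŵ(n,m) for all n,m ∈ ℤ. Let v be a solution of L_α with v(n,m) ≠ 0 and Ŵ(n,m) ≠ 0 for all n,m, and set u(n,m) := v(n+1,m)/v(n,m). Then for all n,m ∈ ℤ the quantity W(n,m) := (Σ_{j=0}^{k} a(j)(n+1,m)·∏_{i=0}^{j} u(n+i,m)) / (Σ_{j=0}^{k} a(j)(n,m)·∏_{i=0}^{j−1} u(n+i,m)) (where the empty product for j = 0 in the denominator equals 1) satisfies both W(n,m) = Ŵ(n+1,m)/Ŵ(n,m) and W(n,m+1) = W(n,m). -/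
/-- `v` is a solution of the linear equation `L_α`. -/
def LinSol (α : ℂ) (v : ℤ → ℤ → ℂ) : Prop :=
  ∀ n m : ℤ, v (n + 1) (m + 1) + v n (m + 1) = α ^ n * (v (n + 1) m - v n m)

/-- The linear combination `Ŵ(n,m) = Σ_{j=0}^{k} a(j)(n,m)·v(n+j,m)`. -/
noncomputable def WhatN (k : ℕ) (a : Fin (k + 1) → ℤ → ℤ → ℂ) (v : ℤ → ℤ → ℂ)
    (n m : ℤ) : ℂ :=
  ∑ j : Fin (k + 1), a j n m * v (n + ((j : ℕ) : ℤ)) m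

/-- The ratio
`W(n,m) = (Σ_j a(j)(n+1,m)·∏_{i=0}^{j} u(n+i,m)) / (Σ_j a(j)(n,m)·∏_{i=0}^{j−1} u(n+i,m))`
(the empty product for `j = 0` in the denominator equals `1`). -/
noncomputable def WratioN (k : ℕ) (a : Fin (k + 1) → ℤ → ℤ → ℂ) (u : ℤ → ℤ → ℂ)
    (n m : ℤ) : ℂ :=
  (∑ j : Fin (k + 1), a j (n + 1) m * ∏ i ∈ Finset.range ((j : ℕ) + 1), u (n + (i : ℤ)) m)
    / (∑ j : Fin (k + 1), a j n m * ∏ i ∈ Finset.range (j : ℕ), u (n + (i : ℤ)) m)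

/-- The Hopf–Cole transform `u(n,m) = v(n+1,m)/v(n,m)`, which linearises the Burgers-type equation.
It is meaningful only where `v` does not vanish, division by zero being `0`. -/
def hopfCole {K : Type*} [Div K] (v : ℤ → ℤ → K) (n m : ℤ) : K :=
  v (n + 1) m / v n m

theorem prod_range_hopfCole {K : Type*} [CommGroupWithZero K] {v : ℤ → ℤ → K} {m : ℤ}
    (hv : ∀ n, v n m ≠ 0) (n : ℤ) (j : ℕ) :
    ∏ i ∈ Finset.range j, hopfCole v (n + i) m = v (n + j) m / v n m := by
  induction j with
  | zero => simp [hv n]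
  | succ j ih =>
    rw [Finset.prod_range_succ, ih, hopfCole, mul_comm, div_mul_div_cancel₀ (hv _), Nat.cast_succ,
      add_assoc]

section

variable {k : ℕ} (a : Fin (k + 1) → ℤ → ℤ → ℂ) {v : ℤ → ℤ → ℂ} {m : ℤ}

theorem sum_mul_prod_range_hopfCole (hv : ∀ n, v n m ≠ 0) (n : ℤ) :
    ∑ j : Fin (k + 1), a j n m * ∏ i ∈ Finset.range (j : ℕ), hopfCole v (n + i) m
      = WhatN k a v n m / v n m := by
  simp only [WhatN, prod_range_hopfCole hv, mul_div_assoc, Finset.sum_div]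

theorem sum_mul_prod_range_succ_hopfCole (hv : ∀ n, v n m ≠ 0) (n : ℤ) :
    ∑ j : Fin (k + 1), a j (n + 1) m * ∏ i ∈ Finset.range ((j : ℕ) + 1), hopfCole v (n + i) m
      = WhatN k a v (n + 1) m / v n m := by
  have shift (j : ℕ) : n + ((j + 1 : ℕ) : ℤ) = n + 1 + j := by push_cast; ring
  simp only [WhatN, prod_range_hopfCole hv, shift, mul_div_assoc, Finset.sum_div]

theorem WratioN_hopfCole (hv : ∀ n, v n m ≠ 0) (n : ℤ) :
    WratioN k a (hopfCole v) n m = WhatN k a v (n + 1) m / WhatN k a v n m := by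
  rw [WratioN, sum_mul_prod_range_succ_hopfCole a hv, sum_mul_prod_range_hopfCole a hv,
    div_div_div_cancel_right₀ (hv n)]

end

theorem linear_first_integral_descends_n_general {k : ℕ} (a : Fin (k + 1) → ℤ → ℤ → ℂ)
    {v : ℤ → ℤ → ℂ} (hv0 : ∀ n m : ℤ, v n m ≠ 0) (_hW0 : ∀ n m : ℤ, WhatN k a v n m ≠ 0)
    (hW : ∀ n m : ℤ, WhatN k a v n (m + 1) = WhatN k a v n m) (n m : ℤ) :
    WratioN k a (hopfCole v) n m = WhatN k a v (n + 1) m / WhatN k a v n m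
      ∧ WratioN k a (hopfCole v) n (m + 1) = WratioN k a (hopfCole v) n m := by
  have ratio (m : ℤ) : WratioN k a (hopfCole v) n m = WhatN k a v (n + 1) m / WhatN k a v n m :=
    WratioN_hopfCole a (hv0 · m) n
  exact ⟨ratio m, by rw [ratio, ratio, hW, hW]⟩

/-- A linear `n`-direction first integral `Ŵ` of `L_α` of order `k` descends, through the
Hopf–Cole transform `u(n,m) = v(n+1,m)/v(n,m)`, to a first integral
`W(n,m) = Ŵ(n+1,m)/Ŵ(n,m)` of the Burgers-type equation, expressible in terms of `u`. -/
theorem linear_first_integral_descends_n (α : ℂ) (hα : α ≠ 0) (k : ℕ) (hk : 1 ≤ k)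
    (a : Fin (k + 1) → ℤ → ℤ → ℂ)
    (ha : ∀ v : ℤ → ℤ → ℂ, LinSol α v → ∀ n m : ℤ,
      WhatN k a v n (m + 1) = WhatN k a v n m)
    (v : ℤ → ℤ → ℂ) (hv : LinSol α v)
    (hv0 : ∀ n m : ℤ, v n m ≠ 0) (hW0 : ∀ n m : ℤ, WhatN k a v n m ≠ 0) :
    ∀ n m : ℤ,
      WratioN k a (fun n m => v (n + 1) m / v n m) n m
          = WhatN k a v (n + 1) m / WhatN k a v n m
        ∧ WratioN k a (fun n m => v (n + 1) m / v n m) n (m + 1)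
          = WratioN k a (fun n m => v (n + 1) m / v n m) n m :=
  linear_first_integral_descends_n_general a hv0 hW0 (ha v hv)
end

section
/- Let N ≥ 1 and let α ∈ ℂ satisfy α^N = −1 and α^j ≠ −1 for all 1 ≤ j < N. If the linear equation L_α possesses a first integral of order l̂ in the m-direction, then l̂ ≥ N. -/
/-- `W` is a first integral of order `k` in the `n`-direction of the equation `E`:
(i) each `W n m` is differentiable at every point with all coordinates nonzero;
(ii) `W` is invariant under the `m`-shift on nowhere-vanishing solutions of `E`;
(iii) `W` genuinely depends on its 0-th and `k`-th arguments (nonzero partial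
derivatives at some point with nonzero coordinates, for some `n, m`). -/
def IsFirstIntegralN (E : (ℤ → ℤ → ℂ) → Prop) (k : ℕ)
    (W : ℤ → ℤ → (Fin (k + 1) → ℂ) → ℂ) : Prop :=
  (∀ (n m : ℤ) (x : Fin (k + 1) → ℂ), (∀ i, x i ≠ 0) → DifferentiableAt ℂ (W n m) x)
  ∧ (∀ w : ℤ → ℤ → ℂ, E w → (∀ n m : ℤ, w n m ≠ 0) → ∀ n m : ℤ,
      W n (m + 1) (fun i => w (n + ((i : ℕ) : ℤ)) (m + 1))
        = W n m (fun i => w (n + ((i : ℕ) : ℤ)) m))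
  ∧ (∃ (n m : ℤ) (x : Fin (k + 1) → ℂ), (∀ i, x i ≠ 0)
      ∧ fderiv ℂ (W n m) x (Pi.single 0 1) ≠ 0)
  ∧ (∃ (n m : ℤ) (x : Fin (k + 1) → ℂ), (∀ i, x i ≠ 0)
      ∧ fderiv ℂ (W n m) x (Pi.single (Fin.last k) 1) ≠ 0)

/-- `W` is a first integral of order `l` in the `m`-direction of the equation `E`. -/
def IsFirstIntegralM (E : (ℤ → ℤ → ℂ) → Prop) (l : ℕ)
    (W : ℤ → ℤ → (Fin (l + 1) → ℂ) → ℂ) : Prop :=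
  (∀ (n m : ℤ) (x : Fin (l + 1) → ℂ), (∀ i, x i ≠ 0) → DifferentiableAt ℂ (W n m) x)
  ∧ (∀ w : ℤ → ℤ → ℂ, E w → (∀ n m : ℤ, w n m ≠ 0) → ∀ n m : ℤ,
      W (n + 1) m (fun i => w (n + 1) (m + ((i : ℕ) : ℤ)))
        = W n m (fun i => w n (m + ((i : ℕ) : ℤ))))
  ∧ (∃ (n m : ℤ) (x : Fin (l + 1) → ℂ), (∀ i, x i ≠ 0)
      ∧ fderiv ℂ (W n m) x (Pi.single 0 1) ≠ 0)
  ∧ (∃ (n m : ℤ) (x : Fin (l + 1) → ℂ), (∀ i, x i ≠ 0)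
      ∧ fderiv ℂ (W n m) x (Pi.single (Fin.last l) 1) ≠ 0)

/-!
The differential of `W n m` at a window of a nowhere-vanishing solution is a linear functional on
`ℂ ^ (l + 1)`, hence a polynomial `p n` of degree at most `l`. Differentiating the invariance of `W`
along exponential solutions `c n * z ^ m` of `L_α` gives `(X + α ^ n) p (n + 1) = (α ^ n - X) p n`.
So `X - α ^ n` divides `p (n + 1)`, and as long as `α ^ j ≠ -1` the roots already accumulated
are not absorbed by the factor `X + α ^ n`. If this holds for all `j ≤ l`, then `p n` has `l + 1`
roots counted with multiplicity, so `p n = 0` and `W` does not depend on its arguments.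
-/

open Polynomial Topology

section Recurrences

theorem exists_int_seq_of_step {A : Type*} (R : ℤ → A → A → Prop)
    (hforward : ∀ n a, ∃ b, R n a b) (hbackward : ∀ n b, ∃ a, R n a b) (n₀ : ℤ) (a₀ : A) :
    ∃ s : ℤ → A, s n₀ = a₀ ∧ ∀ n, R n (s n) (s (n + 1)) := by
  choose next hnext using hforward
  choose prev hprev using hbackward
  let s : ℤ → A := fun n =>
    n.inductionOn' n₀ a₀ (fun k _ a => next k a) (fun k _ a => prev (k - 1) a)
  refine ⟨s, Int.inductionOn'_self, fun n => ?_⟩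
  rcases le_or_gt n₀ n with hn | hn
  · have hs : s (n + 1) = next n (s n) := Int.inductionOn'_add_one hn
    exact hs ▸ hnext n (s n)
  · have hs : s (n + 1 - 1) = prev (n + 1 - 1) (s (n + 1)) := Int.inductionOn'_sub_one hn
    rw [add_sub_cancel_right] at hs
    exact hs ▸ hprev n (s (n + 1))

variable {𝕜 : Type*} [NontriviallyNormedField 𝕜] [CompleteSpace 𝕜]

theorem dense_setOf_forall_add_mul_ne_zero {ι : Type*} [Countable ι] {a b : ι → 𝕜}
    (hab : ∀ i, a i ≠ 0 ∨ b i ≠ 0) : Dense {s : 𝕜 | ∀ i, a i + s * b i ≠ 0} := by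
  refine ((Set.countable_range fun i => -a i / b i).dense_compl 𝕜).mono fun s hs i hi => ?_
  by_cases hb : b i = 0
  · exact (hab i).elim (fun ha => ha (by simpa [hb] using hi)) (· hb)
  · exact hs ⟨i, by rw [div_eq_iff hb]; exact neg_eq_of_add_eq_zero_right hi⟩

theorem exists_linear_recurrence_ne_zero {a : 𝕜} (ha : a ≠ 0) (h : ℤ → 𝕜) :
    ∃ g : ℤ → 𝕜, (∀ m, g m ≠ 0) ∧ ∀ m, g (m + 1) = a * g m + h m := by
  obtain ⟨f, -, hf⟩ := exists_int_seq_of_step (fun m x y => y = a * x + h m)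
    (fun m x => ⟨_, rfl⟩) (fun m y => ⟨a⁻¹ * (y - h m), by field_simp; ring⟩) 0 0
  obtain ⟨t, ht⟩ := (dense_setOf_forall_add_mul_ne_zero (a := f) (b := fun m => a ^ m)
    fun m => .inr (zpow_ne_zero m ha)).nonempty
  refine ⟨fun m => f m + t * a ^ m, ht, fun m => ?_⟩
  linear_combination hf m + t * zpow_add_one₀ ha m

end Recurrences

section Solutions

/-- The entries `f m, f (m + 1), …, f (m + l)` of a sequence: the argument at which a first integral
of order `l` is evaluated. -/
def window (l : ℕ) (f : ℤ → ℂ) (m : ℤ) : Fin (l + 1) → ℂ :=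
  fun i => f (m + ((i : ℕ) : ℤ))

variable {α : ℂ}

theorem LinSol.add_mul {w u : ℤ → ℤ → ℂ} (hw : LinSol α w) (hu : LinSol α u) (s : ℂ) :
    LinSol α fun n m => w n m + s * u n m :=
  fun n m => by linear_combination hw n m + s * hu n m

theorem LinSol.exists_ne_zero_column_eq (hα : α ≠ 0) (n₀ : ℤ) {c : ℤ → ℂ} (hc : ∀ m, c m ≠ 0) :
    ∃ w : ℤ → ℤ → ℂ, LinSol α w ∧ (∀ n m, w n m ≠ 0) ∧ w n₀ = c := by
  obtain ⟨s, hs₀, hs⟩ := exists_int_seq_of_step (A := {f : ℤ → ℂ // ∀ m, f m ≠ 0})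
    (fun n f g => ∀ m, g.1 (m + 1) + f.1 (m + 1) = α ^ n * (g.1 m - f.1 m))
    (fun n f => by
      obtain ⟨g, hg, hstep⟩ := exists_linear_recurrence_ne_zero (zpow_ne_zero n hα)
        fun m => -(f.1 (m + 1) + α ^ n * f.1 m)
      exact ⟨⟨g, hg⟩, fun m => by linear_combination hstep m⟩)
    (fun n f => by
      obtain ⟨g, hg, hstep⟩ := exists_linear_recurrence_ne_zero (neg_ne_zero.2 (zpow_ne_zero n hα))
        fun m => -f.1 (m + 1) + α ^ n * f.1 m
      exact ⟨⟨g, hg⟩, fun m => by linear_combination hstep m⟩) n₀ ⟨c, hc⟩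
  exact ⟨fun n => (s n).1, hs, fun n => (s n).2, by simp only [hs₀]⟩

theorem LinSol.exists_ne_zero_window_eq (hα : α ≠ 0) {l : ℕ} (n m : ℤ)
    {x : Fin (l + 1) → ℂ} (hx : ∀ i, x i ≠ 0) :
    ∃ w : ℤ → ℤ → ℂ, LinSol α w ∧ (∀ n m, w n m ≠ 0) ∧ window l (w n) m = x := by
  let e : Fin (l + 1) → ℤ := fun i => m + ((i : ℕ) : ℤ)
  have he : e.Injective := fun i j hij => by grind
  have hne : ∀ r, Function.extend e x 1 r ≠ 0 := fun r => by
    rw [Function.extend_def]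
    split_ifs
    exacts [hx _, one_ne_zero]
  obtain ⟨w, hw, hw₀, hwn⟩ := LinSol.exists_ne_zero_column_eq hα n hne
  exact ⟨w, hw, hw₀, funext fun i => by simpa only [window, hwn] using he.extend_apply x 1 i⟩

theorem linSol_mul_zpow {z : ℂ} (hz : z ≠ 0) {c : ℤ → ℂ}
    (hc : ∀ n, c (n + 1) * (z - α ^ n) = -(c n * (z + α ^ n))) :
    LinSol α fun n m => c n * z ^ m := fun n m => by
  linear_combination z ^ m * hc n + (c (n + 1) + c n) * zpow_add_one₀ hz m

theorem exists_linSol_mul_zpow {z : ℂ} (hz : z ≠ 0) (hsub : ∀ k : ℤ, z - α ^ k ≠ 0)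
    (hadd : ∀ k : ℤ, z + α ^ k ≠ 0) (n : ℤ) :
    ∃ c : ℤ → ℂ, LinSol α (fun n m => c n * z ^ m) ∧
      c n = z - α ^ n ∧ c (n + 1) = -(z + α ^ n) := by
  obtain ⟨c, hcn, hc⟩ := exists_int_seq_of_step
    (fun n x y => y * (z - α ^ n) = -(x * (z + α ^ n)))
    (fun n x => ⟨_, div_mul_cancel₀ _ (hsub n)⟩)
    (fun n y => ⟨-(y * (z - α ^ n)) / (z + α ^ n), by rw [div_mul_cancel₀ _ (hadd n), neg_neg]⟩)
    n (z - α ^ n)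
  refine ⟨c, linSol_mul_zpow hz hc, hcn, mul_right_cancel₀ (hsub n) ?_⟩
  rw [hc, hcn]
  ring

theorem infinite_setOf_nonresonant (α : ℂ) :
    {z : ℂ | z ≠ 0 ∧ (∀ k : ℤ, z - α ^ k ≠ 0) ∧ ∀ k : ℤ, z + α ^ k ≠ 0}.Infinite := by
  intro hfinite
  have hresonant :
      ({0} ∪ (Set.range fun k : ℤ => α ^ k) ∪ Set.range fun k : ℤ => -α ^ k).Countable :=
    ((Set.countable_singleton 0).union (Set.countable_range _)).union (Set.countable_range _)
  refine not_countable_complex ((hresonant.union hfinite.countable).mono fun z _ => ?_)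
  exact or_iff_not_imp_left.2 fun hz => ⟨fun h => hz (.inl (.inl h)),
    fun k h => hz (.inl (.inr ⟨k, (sub_eq_zero.1 h).symm⟩)),
    fun k h => hz (.inr ⟨k, (eq_neg_of_add_eq_zero_left h).symm⟩)⟩

end Solutions

section Symbol

variable {R : Type*} [CommSemiring R] {d : ℕ}

/-- The linear functional `L` on `R ^ d` viewed as the polynomial whose coefficients are the values
of `L` on the standard basis, so that evaluating it at `z` applies `L` to `(1, z, …, z^(d - 1))`. -/
noncomputable def functionalSymbol (L : (Fin d → R) →ₗ[R] R) : R[X] :=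
  ∑ i : Fin d, C (L (Pi.single i 1)) * X ^ (i : ℕ)

theorem degree_functionalSymbol_lt (L : (Fin d → R) →ₗ[R] R) :
    (functionalSymbol L).degree < d :=
  degree_sum_fin_lt _

theorem coeff_functionalSymbol (L : (Fin d → R) →ₗ[R] R) (i : Fin d) :
    (functionalSymbol L).coeff i = L (Pi.single i 1) := by
  simp [functionalSymbol, coeff_C_mul, coeff_X_pow, Fin.val_inj]

theorem eval_functionalSymbol (L : (Fin d → R) →ₗ[R] R) (z : R) :
    (functionalSymbol L).eval z = L fun i => z ^ (i : ℕ) := by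
  rw [functionalSymbol, eval_finsetSum, L.pi_apply_eq_sum_univ]
  refine Finset.sum_congr rfl fun i _ => ?_
  have hbasis : (fun j => if i = j then 1 else 0) = (Pi.single i 1 : Fin d → R) := by
    ext j
    simp only [Pi.single_apply, eq_comm]
  rw [hbasis, eval_C_mul, eval_X_pow, smul_eq_mul, mul_comm]

end Symbol

section PolynomialRecurrence

variable {K : Type*} [Field K] {α : K} {p : ℤ → K[X]}

theorem isCoprime_X_add_C_prod_X_sub_C (hα : α ≠ 0) {k : ℕ} (hk : ∀ j < k, α ^ j ≠ -1) (n : ℤ) :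
    IsCoprime (X + C (α ^ n)) (∏ j ∈ Finset.range k, (X - C (α ^ (n - j)))) := by
  refine IsCoprime.prod_right fun j hj => ?_
  have hne : -α ^ n - α ^ (n - j) ≠ 0 := fun h => hk j (Finset.mem_range.1 hj) <| by
    have hsplit : α ^ n = α ^ (n - j) * α ^ j := by
      rw [← zpow_natCast, ← zpow_add₀ hα, sub_add_cancel]
    refine mul_left_cancel₀ (zpow_ne_zero (n - j) hα) ?_
    linear_combination -h - hsplit
  simpa using isCoprime_X_sub_C_of_isUnit_sub hne.isUnit

theorem prod_X_sub_C_dvd_of_recurrence (hα : α ≠ 0)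
    (hp : ∀ n, (X + C (α ^ n)) * p (n + 1) = (C (α ^ n) - X) * p n) {k : ℕ}
    (hk : ∀ j < k, α ^ j ≠ -1) (n : ℤ) :
    ∏ j ∈ Finset.range k, (X - C (α ^ (n - j))) ∣ p (n + 1) := by
  induction k generalizing n with
  | zero => simp
  | succ k ih =>
    refine (isCoprime_X_add_C_prod_X_sub_C hα hk n).symm.dvd_of_dvd_mul_left ?_
    have hprev := ih (fun j hj => hk j (hj.trans k.lt_succ_self)) (n - 1)
    rw [sub_add_cancel] at hprev
    rw [hp, Finset.prod_range_succ', mul_comm]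
    refine mul_dvd_mul ?_ ?_
    · exact ⟨-1, by simp⟩
    · simpa only [Nat.cast_succ, sub_sub, add_comm] using hprev

theorem eq_zero_of_recurrence_of_degree_lt (hα : α ≠ 0)
    (hp : ∀ n, (X + C (α ^ n)) * p (n + 1) = (C (α ^ n) - X) * p n) {k : ℕ}
    (hk : ∀ j < k, α ^ j ≠ -1) {n : ℤ} (hdeg : (p n).degree < k) : p n = 0 := by
  have hdvd := prod_X_sub_C_dvd_of_recurrence hα hp hk (n - 1)
  rw [sub_add_cancel] at hdvd
  refine eq_zero_of_dvd_of_degree_lt hdvd ?_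
  simpa [degree_prod] using hdeg

end PolynomialRecurrence

section FirstIntegrals

theorem fderiv_apply_eq_of_dense {𝕜 E F G : Type*} [NontriviallyNormedField 𝕜]
    [NormedAddCommGroup E] [NormedSpace 𝕜 E] [NormedAddCommGroup F] [NormedSpace 𝕜 F]
    [NormedAddCommGroup G] [NormedSpace 𝕜 G] {f : E → G} {g : F → G} {x d : E} {y e : F}
    (hf : DifferentiableAt 𝕜 f x) (hg : DifferentiableAt 𝕜 g y) {S : Set 𝕜} (hS : Dense S)
    (h : ∀ s ∈ S, f (x + s • d) = g (y + s • e)) :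
    fderiv 𝕜 f x d = fderiv 𝕜 g y e := by
  have hf' : HasDerivAt (fun s : 𝕜 => f (x + s • d)) (fderiv 𝕜 f x d) 0 :=
    hf.hasFDerivAt.hasLineDerivAt d
  have hg' : HasDerivAt (fun s : 𝕜 => g (y + s • e)) (fderiv 𝕜 g y e) 0 :=
    hg.hasFDerivAt.hasLineDerivAt e
  have hbase : f x = g y := by
    have : (𝓝[S] (0 : 𝕜)).NeBot := mem_closure_iff_nhdsWithin_neBot.1 (hS 0)
    simpa using tendsto_nhds_unique_of_eventuallyEq
      (hf'.continuousAt.tendsto.mono_left nhdsWithin_le_nhds)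
      (hg'.continuousAt.tendsto.mono_left nhdsWithin_le_nhds) (eventually_nhdsWithin_of_forall h)
  have hunique : UniqueDiffWithinAt 𝕜 S 0 := by
    rw [← uniqueDiffWithinAt_closure, hS.closure_eq]
    exact uniqueDiffWithinAt_univ
  exact hunique.eq_deriv _ hf'.hasDerivWithinAt
    (hg'.hasDerivWithinAt.congr h (by simpa using hbase))

variable {l : ℕ} {W : ℤ → ℤ → (Fin (l + 1) → ℂ) → ℂ} {w : ℤ → ℤ → ℂ}

theorem IsFirstIntegralM.fderiv_window_add_one {E : (ℤ → ℤ → ℂ) → Prop}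
    (hW : IsFirstIntegralM E l W) (hw₀ : ∀ n m, w n m ≠ 0) {u : ℤ → ℤ → ℂ}
    (hwu : ∀ s : ℂ, E fun n m => w n m + s * u n m) (n m : ℤ) :
    fderiv ℂ (W (n + 1) m) (window l (w (n + 1)) m) (window l (u (n + 1)) m) =
      fderiv ℂ (W n m) (window l (w n) m) (window l (u n) m) := by
  have hdense : Dense {s : ℂ | ∀ i : ℤ × ℤ, w i.1 i.2 + s * u i.1 i.2 ≠ 0} :=
    dense_setOf_forall_add_mul_ne_zero fun i => .inl (hw₀ i.1 i.2)
  exact fderiv_apply_eq_of_dense (hW.1 _ _ _ fun _ => hw₀ _ _) (hW.1 _ _ _ fun _ => hw₀ _ _)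
    hdense fun s hs => hW.2.1 _ (hwu s) (fun n m => hs (n, m)) n m

/-- The differential of `W n m` at the window of `w` in column `n`, viewed as a polynomial.
The column `n` is the last argument because the polynomials of different columns are related by a
recurrence in `n`. -/
noncomputable def differentialSymbol (W : ℤ → ℤ → (Fin (l + 1) → ℂ) → ℂ) (w : ℤ → ℤ → ℂ)
    (m n : ℤ) : ℂ[X] :=
  functionalSymbol (fderiv ℂ (W n m) (window l (w n) m)).toLinearMap

theorem fderiv_window_mul_zpow {z : ℂ} (hz : z ≠ 0) (c : ℂ) (m n : ℤ) :
    fderiv ℂ (W n m) (window l (w n) m) (window l (fun r => c * z ^ r) m) =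
      c * z ^ m * (differentialSymbol W w m n).eval z := by
  have hwindow : window l (fun r => c * z ^ r) m =
      (c * z ^ m) • fun i : Fin (l + 1) => z ^ (i : ℕ) := by
    ext i
    simp [window, zpow_add₀ hz, mul_assoc]
  rw [hwindow, map_smul, differentialSymbol, eval_functionalSymbol]
  rfl

theorem IsFirstIntegralM.differentialSymbol_recurrence {α : ℂ}
    (hW : IsFirstIntegralM (LinSol α) l W) (hw : LinSol α w) (hw₀ : ∀ n m, w n m ≠ 0) (m n : ℤ) :
    (X + C (α ^ n)) * differentialSymbol W w m (n + 1) =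
      (C (α ^ n) - X) * differentialSymbol W w m n := by
  refine eq_of_infinite_eval_eq _ _ ((infinite_setOf_nonresonant α).mono ?_)
  rintro z ⟨hz, hsub, hadd⟩
  obtain ⟨c, hc, hcn, hcn'⟩ := exists_linSol_mul_zpow hz hsub hadd n
  have hinv := hW.fderiv_window_add_one hw₀ (hw.add_mul hc) n m
  rw [fderiv_window_mul_zpow hz, fderiv_window_mul_zpow hz, hcn, hcn'] at hinv
  simp only [Set.mem_ofPred_eq, eval_mul, eval_add, eval_sub, eval_X, eval_C]
  refine mul_left_cancel₀ (zpow_ne_zero m hz) ?_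
  linear_combination -hinv

theorem order_lower_bound_m_direction_linear_general {α : ℂ} (hα : α ≠ 0)
    (hW : IsFirstIntegralM (LinSol α) l W) : ∃ j : ℕ, 1 ≤ j ∧ j ≤ l ∧ α ^ j = -1 := by
  by_contra! hne
  obtain ⟨n, m, x, hx, hdep⟩ := hW.2.2.1
  obtain ⟨w, hw, hw₀, rfl⟩ := LinSol.exists_ne_zero_window_eq hα n m hx
  have hpow : ∀ j < l + 1, α ^ j ≠ -1 := fun j hj => by
    rcases j.eq_zero_or_pos with rfl | hpos
    · norm_num
    · exact hne j hpos (Nat.lt_succ_iff.1 hj)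
  have hsymbol : differentialSymbol W w m n = 0 :=
    eq_zero_of_recurrence_of_degree_lt hα (hW.differentialSymbol_recurrence hw hw₀ m) hpow
      (degree_functionalSymbol_lt _)
  have hcoeff := coeff_functionalSymbol (fderiv ℂ (W n m) (window l (w n) m)).toLinearMap 0
  rw [← differentialSymbol, hsymbol, coeff_zero] at hcoeff
  exact hdep hcoeff.symm

end FirstIntegrals

/-- If `α^N = −1` with `N` minimal, then any `m`-direction first integral of `L_α`
has order at least `N`. -/
theorem order_lower_bound_m_direction_linear (N : ℕ) (hN : 1 ≤ N) (α : ℂ)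
    (hαN : α ^ N = -1) (hmin : ∀ j : ℕ, 1 ≤ j → j < N → α ^ j ≠ -1)
    (lhat : ℕ) (hl : 1 ≤ lhat)
    (W : ℤ → ℤ → (Fin (lhat + 1) → ℂ) → ℂ)
    (hW : IsFirstIntegralM (LinSol α) lhat W) :
    N ≤ lhat := by
  have hα : α ≠ 0 := ne_zero_pow (Nat.one_le_iff_ne_zero.1 hN) (hαN ▸ neg_ne_zero.2 one_ne_zero)
  obtain ⟨j, hj, hjl, hαj⟩ := order_lower_bound_m_direction_linear_general hα hW
  exact (not_lt.1 fun hjN => hmin j hj hjN hαj).trans hjl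
end

section
/- Let N ≥ 1 and let α ∈ ℂ satisfy α^N = −1. Let v be a solution of the linear equation L_α, and define the first-direction Laplace transforms by v_0 = v and v_j(n,m) = v_{j−1}(n+1,m) + α^{j−1}·v_{j−1}(n,m) for j ≥ 1. Then the function Ŵ₁(n,m) := (−1)^m·α^{−n·m}·(v_N(n+1,m) − v_N(n,m)) satisfies Ŵ₁(n,m+1) = Ŵ₁(n,m) for all n,m ∈ ℤ; that is, Ŵ₁ = (−1)^m·α^{−nm}·(T₁ − 1)(T₁ + α^{N−1})(T₁ + α^{N−2})⋯(T₁ + 1)v is a first integral of L_α in the n-direction. -/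
/-- The first-direction discrete Laplace transforms:
`v_0 = v` and `v_j(n,m) = v_{j−1}(n+1,m) + α^{j−1}·v_{j−1}(n,m)` for `j ≥ 1`. -/
noncomputable def lap1 (α : ℂ) (v : ℤ → ℤ → ℂ) : ℕ → ℤ → ℤ → ℂ
  | 0 => v
  | j + 1 => fun n m => lap1 α v j (n + 1) m + α ^ j * lap1 α v j n m

section Module

variable {R M : Type*} [CommRing R] [AddCommGroup M] [Module R M]

/-- Solutions of the linear lattice equation with `n`-dependent coefficient `a`, with values in a
module. The equation `L_α` is the case `a n = α ^ n`; allowing any `a` avoids integer powers until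
`α` is known to be a unit. -/
def IsLatticeSolution (a : ℤ → R) (v : ℤ → ℤ → M) : Prop :=
  ∀ n m : ℤ, v (n + 1) (m + 1) + v n (m + 1) = a n • (v (n + 1) m - v n m)

/-- The first-direction Laplace transforms `v_j` of a module-valued lattice function, extending
`lap1` from complex values. -/
def laplaceTransform (α : R) (v : ℤ → ℤ → M) : ℕ → ℤ → ℤ → M
  | 0 => v
  | j + 1 => fun n m => laplaceTransform α v j (n + 1) m + α ^ j • laplaceTransform α v j n m

variable {α : R} {a : ℤ → R} {v : ℤ → ℤ → M}

theorem laplaceTransform_succ (α : R) (v : ℤ → ℤ → M) (j : ℕ) (n m : ℤ) :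
    laplaceTransform α v (j + 1) n m =
      laplaceTransform α v j (n + 1) m + α ^ j • laplaceTransform α v j n m :=
  rfl

theorem laplaceTransform_succ_of_pow_eq_neg_one {N : ℕ} (hα : α ^ N = -1) (v : ℤ → ℤ → M)
    (n m : ℤ) :
    laplaceTransform α v (N + 1) n m =
      laplaceTransform α v N (n + 1) m - laplaceTransform α v N n m := by
  rw [laplaceTransform_succ, hα, neg_one_smul, sub_eq_add_neg]

theorem IsLatticeSolution.laplaceTransform_succ_add_one (hv : IsLatticeSolution a v)
    (ha : ∀ n, a (n + 1) = α * a n) (j : ℕ) (n m : ℤ) :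
    laplaceTransform α v (j + 1) n (m + 1) =
      (α ^ j * a n) • (laplaceTransform α v j (n + 1) m - laplaceTransform α v j n m) := by
  induction j generalizing n with
  | zero => simpa [laplaceTransform] using hv n m
  | succ j ih =>
    rw [laplaceTransform_succ, ih, ih, ha]
    simp only [laplaceTransform_succ]
    module

theorem IsLatticeSolution.laplaceTransform_sub_add_one (hv : IsLatticeSolution a v)
    (ha : ∀ n, a (n + 1) = α * a n) {N : ℕ} (hα : α ^ N = -1) (n m : ℤ) :
    laplaceTransform α v N (n + 1) (m + 1) - laplaceTransform α v N n (m + 1) =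
      (-a n) • (laplaceTransform α v N (n + 1) m - laplaceTransform α v N n m) := by
  rw [← laplaceTransform_succ_of_pow_eq_neg_one hα, hv.laplaceTransform_succ_add_one ha, hα,
    neg_one_mul]

end Module

theorem neg_one_zpow_mul_zpow_mul_neg_zpow {G : Type*} [Group G] [HasDistribNeg G] (α : G)
    (n m : ℤ) :
    (-1) ^ (m + 1) * α ^ (-(n * (m + 1))) * -α ^ n = (-1) ^ m * α ^ (-(n * m)) := by
  have hexp : -(n * (m + 1)) + n = -(n * m) := by ring
  rw [mul_neg, mul_assoc, ← zpow_add, hexp, zpow_add_one, mul_neg_one, neg_mul, neg_neg]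

theorem explicit_first_integral_n_direction_general {R M : Type*} [CommRing R] [AddCommGroup M]
    [Module R M] {α : Rˣ} {N : ℕ} (hα : α ^ N = -1) {v : ℤ → ℤ → M}
    (hv : IsLatticeSolution (fun n ↦ ((α ^ n : Rˣ) : R)) v) (n m : ℤ) :
    ((-1) ^ (m + 1) * α ^ (-(n * (m + 1)))) •
        (laplaceTransform (α : R) v N (n + 1) (m + 1) - laplaceTransform (α : R) v N n (m + 1)) =
      ((-1) ^ m * α ^ (-(n * m))) •
        (laplaceTransform (α : R) v N (n + 1) m - laplaceTransform (α : R) v N n m) := by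
  have hpow : (α : R) ^ N = -1 := by
    simpa using congrArg Units.val hα
  have hcoeff (k : ℤ) : ((α ^ (k + 1) : Rˣ) : R) = α * (α ^ k : Rˣ) := by
    rw [← Units.val_mul, ← zpow_one_add, add_comm]
  rw [hv.laplaceTransform_sub_add_one hcoeff hpow, ← Units.val_neg, ← Units.smul_def, smul_smul,
    neg_one_zpow_mul_zpow_mul_neg_zpow]

theorem lap1_eq_laplaceTransform (α : ℂ) (v : ℤ → ℤ → ℂ) (j : ℕ) :
    lap1 α v j = laplaceTransform α v j := by
  induction j with
  | zero => rfl
  | succ j ih => simp only [lap1, laplaceTransform, ih, smul_eq_mul]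

theorem LinSol.isLatticeSolution {α : ℂˣ} {v : ℤ → ℤ → ℂ} (hv : LinSol α v) :
    IsLatticeSolution (fun n ↦ ((α ^ n : ℂˣ) : ℂ)) v := by
  simpa only [IsLatticeSolution, LinSol, Units.val_zpow_eq_zpow_val, smul_eq_mul] using hv

/-- `Ŵ₁(n,m) = (−1)^m·α^{−n·m}·(v_N(n+1,m) − v_N(n,m))` is a first integral of `L_α`
in the `n`-direction when `α^N = −1`. -/
theorem explicit_first_integral_n_direction (N : ℕ) (hN : 1 ≤ N) (α : ℂ)
    (hαN : α ^ N = -1) (v : ℤ → ℤ → ℂ) (hv : LinSol α v) :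
    ∀ n m : ℤ,
      (-1 : ℂ) ^ (m + 1) * α ^ (-(n * (m + 1)))
          * (lap1 α v N (n + 1) (m + 1) - lap1 α v N n (m + 1))
        = (-1 : ℂ) ^ m * α ^ (-(n * m)) * (lap1 α v N (n + 1) m - lap1 α v N n m) := by
  intro n m
  lift α to ℂˣ using (isUnit_pow_iff (by lia)).1 (hαN ▸ isUnit_one.neg)
  simpa [lap1_eq_laplaceTransform, Units.smul_def] using
    explicit_first_integral_n_direction_general (Units.ext (by simpa using hαN))
      hv.isLatticeSolution n m
end
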